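/- Let (ε, Y_1, ..., Y_J) be a random vector whose joint distribution is multivariate normal, with Y_1(ω), ..., Y_J(ω) almost surely pairwise distinct, and suppose there is a constant c ∈ ℝ with Cov(ε, Y_j) = c for every j ∈ {1, ..., J} (in particular this holds if Cov(ε, Y_j) = 0 for all j). Then for every fixed index j* ∈ {1, ..., J}, the covariance of ε with the normalized variable ξ_{j*} := max_{j ≠ j*} Y_j − Y_{j*} is zero: Cov(ε, max_{j ≠ j*} Y_j − Y_{j*}) = 0. -/

import Mathlib

/-!
The differences `D i = Y i - Y j*` form, together with `ε`, a Gaussian vector (a linear image of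
`(ε, Y)`), and `Cov(ε, D i) = c - c = 0`. For jointly Gaussian vectors zero covariance means
independence, so `ε` is independent of the whole vector `D`. Since subtracting `Y j*` commutes with
taking the maximum, `ξ = max_{i ≠ j*} D i` is a measurable function of `D`; hence `ε` and `ξ` are
independent and `E[ε ξ] = E[ε] E[ξ]`.
-/

open MeasureTheory ProbabilityTheory Real

/-- Covariance of two real random variables: `Cov(X, Y) = E[X*Y] - E[X] * E[Y]`. -/
noncomputable def covar {Ω : Type*} [MeasurableSpace Ω] (μ : Measure Ω) (X Y : Ω → ℝ) : ℝ :=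
  (∫ ω, X ω * Y ω ∂μ) - (∫ ω, X ω ∂μ) * (∫ ω, Y ω ∂μ)

/-- The `r`-th order statistic (with `r = 0` the largest and `r = n - 1` the smallest) of
the random variables `X 0, ..., X (n-1)`: pointwise, the `r`-th largest value among
`X 0 ω, ..., X (n-1) ω`. -/
noncomputable def orderStat {Ω : Type*} {n : ℕ} (X : Fin n → Ω → ℝ) (r : Fin n) (ω : Ω) : ℝ :=
  X (Tuple.sort (fun i => X i ω) r.rev) ω

/-- `(X 0, ..., X (n-1))` is a multivariate normal vector with mean vector `m` and
(positive semidefinite) covariance matrix `S`: every linear combination of the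
coordinates is one-dimensional Gaussian with the corresponding mean and variance. -/
def IsMultivariateGaussian {Ω : Type*} [MeasurableSpace Ω] (μ : Measure Ω) {n : ℕ}
    (X : Fin n → Ω → ℝ) (m : Fin n → ℝ) (S : Matrix (Fin n) (Fin n) ℝ) : Prop :=
  S.PosSemidef ∧ ∀ a : Fin n → ℝ,
    Measure.map (fun ω => ∑ i, a i * X i ω) μ =
      gaussianReal (∑ i, a i * m i) (Real.toNNReal (∑ i, ∑ j, a i * S i j * a j))

/-- `maxExcept Y j ω` is the maximum of `Y i ω` over all indices `i ≠ j`
(there are at least two coordinates, so the maximum is over a nonempty set). -/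
noncomputable def maxExcept {Ω : Type*} {n : ℕ} (Y : Fin (n + 2) → Ω → ℝ)
    (j : Fin (n + 2)) (ω : Ω) : ℝ :=
  (Finset.univ.erase j).sup'
    (by
      rw [← Finset.card_pos, Finset.card_erase_of_mem (Finset.mem_univ j),
        Finset.card_univ, Fintype.card_fin]
      omega)
    (fun i => Y i ω)

/-- Normality of all linear combinations of the coordinates gives a Gaussian law on `Fin n → ℝ`,
because every continuous linear form on `Fin n → ℝ` is such a combination. -/
lemma IsMultivariateGaussian.hasGaussianLaw {Ω : Type*} [MeasurableSpace Ω] {μ : Measure Ω}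
    {n : ℕ} {X : Fin n → Ω → ℝ} {m : Fin n → ℝ} {S : Matrix (Fin n) (Fin n) ℝ}
    (h : IsMultivariateGaussian μ X m S) (hX : ∀ i, Measurable (X i)) :
    HasGaussianLaw (fun ω i => X i ω) μ where
  isGaussian_map := by
    refine isGaussian_of_map_eq_gaussianReal fun L => ?_
    have key : Measure.map L (Measure.map (fun ω i => X i ω) μ) =
        Measure.map (fun ω => ∑ i, L (Pi.single i 1) * X i ω) μ := by
      rw [Measure.map_map (by fun_prop) (measurable_pi_lambda _ hX)]
      congr 1
      ext ω
      simp only [Function.comp_apply]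
      conv_lhs => rw [← Finset.univ_sum_single (fun i => X i ω), map_sum]
      refine Finset.sum_congr rfl fun i _ => ?_
      rw [mul_comm, ← smul_eq_mul, ← map_smul, ← Pi.single_smul, smul_eq_mul, mul_one]
    exact ⟨_, _, key.trans (h.2 fun i => L (Pi.single i 1))⟩

/-- If `(ε, Y 0, ..., Y (J-1))` is jointly multivariate normal, the `Y j` are a.s. pairwise
distinct, and `Cov(ε, Y j) = c` for every `j` (in particular, if all these covariances are
zero), then for every fixed `j*` the covariance of `ε` with the normalized variable
`ξ_{j*} = max_{j ≠ j*} Y j - Y j*` is zero. -/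
theorem covar_normalized_eq_zero_of_const_covar {Ω : Type*} [MeasurableSpace Ω]
    (μ : Measure Ω) [IsProbabilityMeasure μ] {J : ℕ} (ε : Ω → ℝ)
    (Y : Fin (J + 2) → Ω → ℝ)
    (hmeasε : Measurable ε) (hmeasY : ∀ j, Measurable (Y j))
    (m : Fin (J + 3) → ℝ) (S : Matrix (Fin (J + 3)) (Fin (J + 3)) ℝ)
    (hgauss : IsMultivariateGaussian μ (Fin.cons ε Y) m S)
    (hdist : ∀ᵐ ω ∂μ, ∀ i j, i ≠ j → Y i ω ≠ Y j ω)
    (c : ℝ) (hc : ∀ j, covar μ ε (Y j) = c)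
    (j' : Fin (J + 2)) :
    covar μ ε (fun ω => maxExcept Y j' ω - Y j' ω) = 0 := by
  classical
  have hX : ∀ i, Measurable ((Fin.cons ε Y : Fin (J + 3) → Ω → ℝ) i) :=
    Fin.cases hmeasε hmeasY
  have hG := hgauss.hasGaussianLaw hX
  have hε : MemLp ε 2 μ := (hG.eval 0).memLp_two
  have hY : ∀ j, MemLp (Y j) 2 μ := fun j => (hG.eval j.succ).memLp_two
  have hcov : ∀ j, cov[ε, Y j; μ] = c := fun j => by
    rw [covariance_eq_sub hε (hY j), ← hc j]
    rfl
  let L : (Fin (J + 3) → ℝ) →L[ℝ] (Unit → ℝ) × (Fin (J + 2) → ℝ) :=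
    (ContinuousLinearMap.pi fun _ => ContinuousLinearMap.proj 0).prod
      (ContinuousLinearMap.pi fun j =>
        ContinuousLinearMap.proj (R := ℝ) (φ := fun _ : Fin (J + 3) => ℝ) j.succ -
          ContinuousLinearMap.proj j'.succ)
  have hpair : HasGaussianLaw
      (fun ω => ((fun _ : Unit => ε ω), fun j => Y j ω - Y j' ω)) μ := hG.map_fun L
  have hind : IndepFun (fun ω (_ : Unit) => ε ω) (fun ω j => Y j ω - Y j' ω) μ := by
    refine HasGaussianLaw.indepFun_of_covariance_eval (X := fun _ => ε)
      (Y := fun j ω => Y j ω - Y j' ω) hpair fun _ j => ?_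
    rw [covariance_fun_sub_right hε (hY j) (hY j'), hcov, hcov, sub_self]
  have hne : (Finset.univ.erase j').Nonempty := by
    rw [← Finset.card_pos, Finset.card_erase_of_mem (Finset.mem_univ j'),
      Finset.card_univ, Fintype.card_fin]
    omega
  let g : (Fin (J + 2) → ℝ) → ℝ := fun d => (Finset.univ.erase j').sup' hne d
  have hg : Measurable g := by
    have := Finset.measurable_sup' hne
      (f := fun (i : Fin (J + 2)) (d : Fin (J + 2) → ℝ) => d i) fun i _ => measurable_pi_apply i
    convert this using 1
    ext d
    simp [g, Finset.sup'_apply]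
  have hξ : (fun ω => maxExcept Y j' ω - Y j' ω) = fun ω => g (fun j => Y j ω - Y j' ω) := by
    ext ω
    exact Finset.apply_sup'_eq_sup'_comp hne (fun x => x - Y j' ω)
      fun x y => (max_sub_sub_right x y _).symm
  have hD : Measurable fun ω j => Y j ω - Y j' ω :=
    measurable_pi_lambda _ fun j => (hmeasY j).sub (hmeasY j')
  rw [hξ, covar, sub_eq_zero]
  exact (hind.comp (measurable_pi_apply ()) hg).integral_fun_mul_eq_mul_integral
    hmeasε.aestronglyMeasurable (hg.comp hD).aestronglyMeasurable
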